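/- Let H be a complex Hilbert space and φ a state on B(H). Then φ is normal if and only if there exists a density matrix ρ, i.e. a positive trace-class operator ρ on H with tr(ρ) = 1, such that φ(A) = tr(ρ A) for all A ∈ B(H). -/

import Mathlib

open scoped InnerProductSpace ComplexOrder

/-- The Loewner order relation on bounded operators: `A ≤ B` iff `B - A` is positive. -/
def OpLE {H : Type} [NormedAddCommGroup H] [InnerProductSpace ℂ H] [CompleteSpace H]
    (A B : H →L[ℂ] H) : Prop :=
  (B - A).IsPositive

/-- A state `φ` on `B(H)` is normal if `φ(sup_α A_α) = sup_α φ(A_α)` for every norm-bounded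
increasing net of positive operators possessing a least upper bound. -/
def IsNormalState {H : Type} [NormedAddCommGroup H] [InnerProductSpace ℂ H] [CompleteSpace H]
    (φ : (H →L[ℂ] H) →L[ℂ] ℂ) : Prop :=
  ∀ (ι : Type) (_ : Preorder ι) (_ : IsDirected ι (· ≤ ·)) (A : ι → H →L[ℂ] H),
    (∀ i j, i ≤ j → OpLE (A i) (A j)) →
    (∀ i, (A i).IsPositive) →
    (∃ C : ℝ, ∀ i, ‖A i‖ ≤ C) →
    ∀ S : H →L[ℂ] H,
      ((∀ i, OpLE (A i) S) ∧ ∀ T : H →L[ℂ] H, (∀ i, OpLE (A i) T) → OpLE S T) →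
      IsLUB (Set.range fun i => φ (A i)) (φ S)

/-!
Let `P F` be the projection onto the span of finitely many vectors `F` of a Hilbert basis. By the
Cauchy–Schwarz inequality `|φ(A) - φ(A P)|² ≤ ‖A‖² φ(1) φ(1 - P)`, so once `φ(P F) → φ(1)`, the
numbers `φ(A (P F))` converge to `φ(A)`, uniformly for `A` in a norm-bounded set.

A normal `φ` satisfies `φ(P F) → φ(1)` because `1` is the supremum of the `P F`, and the limit
`φ(A) = lim φ(A (P F))` is then the trace formula for the operator `ρ` with
`⟪x, ρ y⟫ = φ(|y⟩⟨x|)`. Conversely, the trace formula for `A = 1` says that `φ(P F) → φ(1)`. A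
bounded increasing net converges strongly to its supremum, each `A ↦ φ(A (P F))` is continuous
along strongly convergent nets, and uniformity permits exchanging the two limits.
-/

open Filter Topology InnerProductSpace

section ComplexOrder

instance : SupConvergenceClass ℂ where
  tendsto_coe_atTop_isLUB a s ha := by
    have him (z : s) : (z : ℂ).im = a.im := (Complex.le_def.1 (ha.1 z.2)).2
    have hre : IsLUB (Set.range fun z : s => (z : ℂ).re) a.re := by
      refine ⟨?_, fun r hr => ?_⟩
      · rintro _ ⟨z, rfl⟩
        exact (Complex.le_def.1 (ha.1 z.2)).1
      · have hub : (⟨r, a.im⟩ : ℂ) ∈ upperBounds s := fun z hz =>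
          Complex.le_def.2 ⟨hr ⟨⟨z, hz⟩, rfl⟩, him ⟨z, hz⟩⟩
        exact (Complex.le_def.1 (ha.2 hub)).1
    have hlim : Tendsto (fun z : s => (z : ℂ).re) atTop (𝓝 a.re) :=
      tendsto_atTop_isLUB (fun z w hzw => (Complex.le_def.1 hzw).1) hre
    rw [← Complex.re_add_im a]
    refine (((Complex.continuous_ofReal.tendsto _).comp hlim).add_const _).congr fun z => ?_
    rw [Function.comp_apply, ← him z, Complex.re_add_im]

end ComplexOrder

section StrongLimits

variable {𝕜 E ι : Type*} [RCLike 𝕜] [NormedAddCommGroup E] [InnerProductSpace 𝕜 E]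
  {A : ι → E →L[𝕜] E} {T : E →L[𝕜] E}

theorem isPositive_of_tendsto_apply {l : Filter ι} [l.NeBot]
    (hA : ∀ᶠ i in l, (A i).IsPositive) (hT : ∀ x, Tendsto (fun i => A i x) l (𝓝 (T x))) :
    T.IsPositive := by
  have hinner (x y : E) : Tendsto (fun i => ⟪A i x, y⟫_𝕜) l (𝓝 ⟪T x, y⟫_𝕜) :=
    (hT x).inner tendsto_const_nhds
  refine T.isPositive_iff.2 ⟨fun x y => ?_, fun x => ?_⟩
  · exact tendsto_nhds_unique_of_eventuallyEq (hinner x y) (tendsto_const_nhds.inner (hT y))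
      (hA.mono fun i hi => hi.isSymmetric x y)
  · exact ge_of_tendsto (hinner x x) (hA.mono fun i hi => hi.inner_nonneg_left x)

theorem isLUB_range_of_tendsto_apply [Preorder ι] [IsDirectedOrder ι] [Nonempty ι]
    (hA : Monotone A) (hT : ∀ x, Tendsto (fun i => A i x) atTop (𝓝 (T x))) :
    IsLUB (Set.range A) T := by
  refine ⟨?_, fun S hS => ?_⟩
  · rintro _ ⟨i, rfl⟩
    exact isPositive_of_tendsto_apply (A := fun j => A j - A i)
      ((eventually_ge_atTop i).mono fun j hij => hA hij) fun x => (hT x).sub_const _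
  · exact isPositive_of_tendsto_apply (l := atTop) (A := fun j => S - A j)
      (.of_forall fun j => hS ⟨j, rfl⟩) fun x => (hT x).const_sub _

end StrongLimits

section Vigier

theorem cauchy_map_atTop_of_norm_sub_sq_le {ι E : Type*} [Preorder ι] [IsDirectedOrder ι]
    [Nonempty ι] [SeminormedAddCommGroup E] {u : ι → E} {f : ι → ℝ}
    (hbdd : BddAbove (Set.range f)) (h : ∀ i j, i ≤ j → ‖u j - u i‖ ^ 2 ≤ f j - f i) :
    Cauchy (map u atTop) := by
  have hmono : Monotone f := fun i j hij => sub_nonneg.1 ((sq_nonneg _).trans (h i j hij))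
  have hgap : Tendsto (fun N => √((⨆ i, f i) - f N)) atTop (𝓝 0) := by
    simpa using ((tendsto_atTop_ciSup hmono hbdd).const_sub (⨆ i, f i)).sqrt
  have hdist (N i : ι) (hi : N ≤ i) : dist (u i) (u N) ≤ √((⨆ i, f i) - f N) := by
    rw [dist_eq_norm]
    exact Real.le_sqrt_of_sq_le ((h N i hi).trans (sub_le_sub_right (le_ciSup hbdd i) _))
  refine Metric.cauchy_iff.2 ⟨inferInstance, fun ε hε => ?_⟩
  obtain ⟨N, hN⟩ := (hgap.eventually_lt_const (half_pos hε)).exists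
  refine ⟨u '' Set.Ici N, image_mem_map (Ici_mem_atTop N), ?_⟩
  rintro _ ⟨i, hi, rfl⟩ _ ⟨j, hj, rfl⟩
  calc dist (u i) (u j) ≤ dist (u i) (u N) + dist (u j) (u N) := dist_triangle_right _ _ _
    _ < ε := by linarith [hdist N i hi, hdist N j hj]

variable {H ι : Type*} [NormedAddCommGroup H] [InnerProductSpace ℂ H] [CompleteSpace H]

theorem norm_apply_sq_le_norm_mul_re_inner {B : H →L[ℂ] H} (hB : 0 ≤ B) (x : H) :
    ‖B x‖ ^ 2 ≤ ‖B‖ * (⟪x, B x⟫_ℂ).re := by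
  obtain ⟨C, rfl⟩ := CStarAlgebra.nonneg_iff_eq_star_mul_self.1 hB
  calc ‖star C (C x)‖ ^ 2 ≤ (‖C‖ * ‖C x‖) ^ 2 := by
        gcongr
        simpa only [norm_star] using (star C).le_opNorm (C x)
    _ = ‖star C * C‖ * ‖C x‖ ^ 2 := by rw [CStarRing.norm_star_mul_self]; ring
    _ = ‖star C * C‖ * (⟪x, (star C * C) x⟫_ℂ).re := by
        rw [C.apply_norm_sq_eq_inner_adjoint_right]; rfl

variable [Preorder ι] [IsDirectedOrder ι] [Nonempty ι] {A : ι → H →L[ℂ] H} {C : ℝ}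

theorem exists_tendsto_apply_of_monotone (hA : Monotone A) (hC : ∀ i, ‖A i‖ ≤ C) (x : H) :
    ∃ y, Tendsto (fun i => A i x) atTop (𝓝 y) := by
  have hC0 : 0 ≤ C := (norm_nonneg _).trans (hC (Classical.arbitrary ι))
  have hbdd : BddAbove (Set.range fun i => (C + C) * (⟪x, A i x⟫_ℂ).re) := by
    refine ⟨(C + C) * (‖x‖ * (C * ‖x‖)), Set.forall_mem_range.2 fun i => ?_⟩
    gcongr
    exact (re_inner_le_norm (𝕜 := ℂ) x (A i x)).trans
      (mul_le_mul_of_nonneg_left ((A i).le_of_opNorm_le (hC i) x) (norm_nonneg x))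
  refine cauchy_map_iff_exists_tendsto.1 (cauchy_map_atTop_of_norm_sub_sq_le hbdd fun i j hij => ?_)
  calc ‖A j x - A i x‖ ^ 2 ≤ ‖A j - A i‖ * (⟪x, (A j - A i) x⟫_ℂ).re :=
        norm_apply_sq_le_norm_mul_re_inner (sub_nonneg.2 (hA hij)) x
    _ ≤ (C + C) * (⟪x, (A j - A i) x⟫_ℂ).re := by
        gcongr
        · exact (hA hij).re_inner_nonneg_right x
        · exact norm_sub_le_of_le (hC j) (hC i)
    _ = (C + C) * (⟪x, A j x⟫_ℂ).re - (C + C) * (⟪x, A i x⟫_ℂ).re := by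
        rw [sub_apply, inner_sub_right, Complex.sub_re, mul_sub]

theorem exists_isLUB_range_tendsto_apply (hA : Monotone A) (hC : ∀ i, ‖A i‖ ≤ C) :
    ∃ T, IsLUB (Set.range A) T ∧ ∀ x, Tendsto (fun i => A i x) atTop (𝓝 (T x)) := by
  choose f hf using exists_tendsto_apply_of_monotone hA hC
  let T : H →L[ℂ] H := .ofTendstoOfBoundedRange f A (tendsto_pi_nhds.2 hf)
    (isBounded_iff_forall_norm_le.2 ⟨C, Set.forall_mem_range.2 hC⟩)
  exact ⟨T, isLUB_range_of_tendsto_apply hA hf, hf⟩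

theorem tendsto_apply_of_isLUB_range {S : H →L[ℂ] H} (hA : Monotone A) (hC : ∀ i, ‖A i‖ ≤ C)
    (hS : IsLUB (Set.range A) S) (x : H) : Tendsto (fun i => A i x) atTop (𝓝 (S x)) := by
  obtain ⟨T, hT, hlim⟩ := exists_isLUB_range_tendsto_apply hA hC
  exact hS.unique hT ▸ hlim x

end Vigier

section PositiveFunctionals

theorem norm_apply_star_mul_sq_le {A : Type*} [NonUnitalCStarAlgebra A] [PartialOrder A]
    [StarOrderedRing A] (f : A →ₚ[ℂ] ℂ) (a b : A) :
    ‖f (star a * b)‖ ^ 2 ≤ ‖f (star a * a)‖ * ‖f (star b * b)‖ := by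
  have hnorm (c : A) : ‖f (star c * c)‖ = ‖f.toPreGNS c‖ ^ 2 := by
    have h := f.preGNS_norm_sq (f.toPreGNS c)
    rw [f.ofPreGNS_toPreGNS] at h
    rw [← h, norm_pow, Complex.norm_real, norm_norm]
  rw [hnorm, hnorm, ← mul_pow]
  gcongr
  exact norm_inner_le_norm (𝕜 := ℂ) (f.toPreGNS a) (f.toPreGNS b)

variable {A : Type*} [CStarAlgebra A] [PartialOrder A] [StarOrderedRing A] (f : A →ₚ[ℂ] ℂ)

theorem norm_apply_sub_apply_mul_le {p : A} (hp : IsStarProjection p) (a : A) :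
    ‖f a - f (a * p)‖ ≤ ‖a‖ * √(‖f 1‖ * ‖f (1 - p)‖) := by
  have hq : star (1 - p) * (1 - p) = 1 - p := by
    rw [hp.one_sub.isSelfAdjoint.star_eq, hp.one_sub.isIdempotentElem.eq]
  refine le_of_sq_le_sq ?_ (by positivity)
  calc ‖f a - f (a * p)‖ ^ 2 = ‖f (star (star a) * (1 - p))‖ ^ 2 := by
        rw [star_star, mul_sub, mul_one, map_sub]
    _ ≤ ‖f (star (star a) * star a)‖ * ‖f (star (1 - p) * (1 - p))‖ :=
        norm_apply_star_mul_sq_le f _ _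
    _ ≤ ‖f 1‖ * ‖star (star a) * star a‖ * ‖f (1 - p)‖ := by
        rw [hq]
        gcongr
        exact f.norm_apply_le_of_nonneg _ (star_mul_self_nonneg _)
    _ = (‖a‖ * √(‖f 1‖ * ‖f (1 - p)‖)) ^ 2 := by
        rw [CStarRing.norm_star_mul_self, norm_star, mul_pow, Real.sq_sqrt (by positivity)]
        ring

theorem tendstoUniformly_apply_mul {κ ι : Type*} {l : Filter κ} {p : κ → A}
    (hp : ∀ k, IsStarProjection (p k)) (hlim : Tendsto (fun k => f (p k)) l (𝓝 (f 1)))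
    {a : ι → A} {C : ℝ} (hC : ∀ i, ‖a i‖ ≤ C) :
    TendstoUniformly (fun k i => f (a i * p k)) (fun i => f (a i)) l := by
  have hbound : Tendsto (fun k => C * √(‖f 1‖ * ‖f (1 - p k)‖)) l (𝓝 0) := by
    simpa using (((hlim.const_sub (f 1)).norm.const_mul ‖f 1‖).sqrt).const_mul C
  refine Metric.tendstoUniformly_iff.2 fun ε hε => ?_
  filter_upwards [hbound.eventually_lt_const hε] with k hk i
  calc dist (f (a i)) (f (a i * p k)) ≤ ‖a i‖ * √(‖f 1‖ * ‖f (1 - p k)‖) := by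
        rw [dist_eq_norm]
        exact norm_apply_sub_apply_mul_le f (hp k) (a i)
    _ ≤ C * √(‖f 1‖ * ‖f (1 - p k)‖) := by
        gcongr
        exact hC i
    _ < ε := hk

end PositiveFunctionals

section FiniteProjections

variable {𝕜 E ι : Type*} [RCLike 𝕜] [NormedAddCommGroup E] [InnerProductSpace 𝕜 E]

/-- The operator `∑ j ∈ F, |v j⟩⟨v j|`. For an orthonormal family `v` it is the orthogonal
projection onto the span of the vectors `v j` with `j ∈ F`. -/
noncomputable def finsetProj (v : ι → E) (F : Finset ι) : E →L[𝕜] E :=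
  ∑ j ∈ F, rankOne 𝕜 (v j) (v j)

theorem mul_finsetProj (A : E →L[𝕜] E) (v : ι → E) (F : Finset ι) :
    A * finsetProj v F = ∑ j ∈ F, rankOne 𝕜 (A (v j)) (v j) := by
  simp only [finsetProj, Finset.mul_sum, ContinuousLinearMap.mul_def, comp_rankOne]

theorem finsetProj_monotone (v : ι → E) : Monotone (finsetProj (𝕜 := 𝕜) v) :=
  fun F G hFG => by
    classical
    rw [ContinuousLinearMap.le_def, finsetProj, finsetProj, ← Finset.sum_sdiff_eq_sub hFG]
    exact ContinuousLinearMap.isPositive_sum _ fun j _ => isPositive_rankOne_self (v j)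

theorem finsetProj_apply_self {v : ι → E} (hv : Orthonormal 𝕜 v) {F : Finset ι} {j : ι}
    (hj : j ∈ F) : finsetProj (𝕜 := 𝕜) v F (v j) = v j := by
  classical
  simp [finsetProj, orthonormal_iff_ite.1 hv, hj]

theorem isStarProjection_finsetProj [CompleteSpace E] {v : ι → E} (hv : Orthonormal 𝕜 v)
    (F : Finset ι) : IsStarProjection (finsetProj (𝕜 := 𝕜) v F) where
  isIdempotentElem := by
    rw [IsIdempotentElem, mul_finsetProj]
    exact Finset.sum_congr rfl fun j hj => by rw [finsetProj_apply_self hv hj]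
  isSelfAdjoint :=
    (ContinuousLinearMap.isPositive_sum F fun j _ => isPositive_rankOne_self (v j)).isSelfAdjoint

theorem tendsto_finsetProj_apply (e : HilbertBasis ι 𝕜 E) (x : E) :
    Tendsto (fun F => finsetProj (𝕜 := 𝕜) e F x) atTop (𝓝 x) := by
  simpa [finsetProj, HasSum, e.repr_apply_apply] using e.hasSum_repr x

theorem isLUB_range_finsetProj (e : HilbertBasis ι 𝕜 E) :
    IsLUB (Set.range (finsetProj (𝕜 := 𝕜) e)) 1 :=
  isLUB_range_of_tendsto_apply (finsetProj_monotone e) (tendsto_finsetProj_apply e)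

end FiniteProjections

section DensityOperator

variable {𝕜 E ι : Type*} [RCLike 𝕜] [NormedAddCommGroup E] [InnerProductSpace 𝕜 E]

theorem hasSum_inner_rankOne_apply (e : HilbertBasis ι 𝕜 E) (ρ : E →L[𝕜] E) (x y : E) :
    HasSum (fun j => ⟪e j, ρ (rankOne 𝕜 y x (e j))⟫_𝕜) ⟪x, ρ y⟫_𝕜 := by
  simpa [inner_smul_right] using e.hasSum_inner_mul_inner x (ρ y)

variable [CompleteSpace E] (φ : (E →L[𝕜] E) →L[𝕜] 𝕜)

/-- The operator `ρ` determined by `⟪x, ρ y⟫ = φ(|y⟩⟨x|)`, that is, by `φ(A) = tr(ρ A)` for all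
`A` of rank one. -/
noncomputable def densityOperator : E →L[𝕜] E :=
  ContinuousLinearMap.adjoint (continuousLinearMapOfBilin
    ((ContinuousLinearMap.compL 𝕜 E (E →L[𝕜] E) 𝕜 φ).comp (rankOne 𝕜).flip))

theorem inner_densityOperator (x y : E) :
    ⟪x, densityOperator φ y⟫_𝕜 = φ (rankOne 𝕜 y x) := by
  rw [densityOperator, ContinuousLinearMap.adjoint_inner_right, continuousLinearMapOfBilin_apply]
  rfl

theorem sum_inner_densityOperator (v : ι → E) (A : E →L[𝕜] E) (F : Finset ι) :
    ∑ j ∈ F, ⟪v j, densityOperator φ (A (v j))⟫_𝕜 = φ (A * finsetProj v F) := by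
  simp only [mul_finsetProj, map_sum, inner_densityOperator]

theorem eq_densityOperator_of_hasSum {φ : (E →L[𝕜] E) →L[𝕜] 𝕜} {ρ : E →L[𝕜] E}
    (e : HilbertBasis ι 𝕜 E) (h : ∀ A : E →L[𝕜] E, HasSum (fun j => ⟪e j, ρ (A (e j))⟫_𝕜) (φ A)) :
    ρ = densityOperator φ :=
  ContinuousLinearMap.ext fun y => ext_inner_left 𝕜 fun x => by
    rw [inner_densityOperator]
    exact (hasSum_inner_rankOne_apply e ρ x y).unique (h _)

end DensityOperator

section NormalFunctionals

section

variable {H ι κ : Type*} [NormedAddCommGroup H] [InnerProductSpace ℂ H] [CompleteSpace H]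
  {φ : (H →L[ℂ] H) →L[ℂ] ℂ}

theorem isPositive_densityOperator (hφ : Monotone φ) : (densityOperator φ).IsPositive := by
  have hnonneg (x : H) : 0 ≤ ⟪densityOperator φ x, x⟫_ℂ := by
    rw [← inner_conj_symm, ← Complex.star_def, star_nonneg_iff, inner_densityOperator, ← map_zero φ]
    exact hφ ((ContinuousLinearMap.nonneg_iff_isPositive _).2 (isPositive_rankOne_self x))
  refine (densityOperator φ).isPositive_iff_complex.2 fun x => ⟨?_, (hnonneg x).1⟩
  exact Complex.ext rfl (hnonneg x).2

theorem tendstoUniformly_apply_mul_finsetProj (hφ : Monotone φ) (e : HilbertBasis κ ℂ H)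
    (h : Tendsto (fun F => φ (finsetProj e F)) atTop (𝓝 (φ 1))) {A : ι → H →L[ℂ] H} {C : ℝ}
    (hC : ∀ i, ‖A i‖ ≤ C) :
    TendstoUniformly (fun F i => φ (A i * finsetProj e F)) (fun i => φ (A i)) atTop :=
  tendstoUniformly_apply_mul ⟨φ.toLinearMap, hφ⟩ (isStarProjection_finsetProj e.orthonormal) h hC

theorem tendsto_apply_mul_finsetProj (hφ : Monotone φ) (e : HilbertBasis κ ℂ H)
    (h : Tendsto (fun F => φ (finsetProj e F)) atTop (𝓝 (φ 1))) (A : H →L[ℂ] H) :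
    Tendsto (fun F => φ (A * finsetProj e F)) atTop (𝓝 (φ A)) :=
  (tendstoUniformly_apply_mul_finsetProj hφ e h fun _ : Unit => le_refl ‖A‖).tendsto_at ()

theorem hasSum_inner_densityOperator (hφ : Monotone φ) (e : HilbertBasis κ ℂ H)
    (h : Tendsto (fun F => φ (finsetProj e F)) atTop (𝓝 (φ 1))) (A : H →L[ℂ] H) :
    HasSum (fun j => ⟪e j, densityOperator φ (A (e j))⟫_ℂ) (φ A) := by
  simpa only [HasSum, SummationFilter.unconditional_filter, sum_inner_densityOperator]
    using tendsto_apply_mul_finsetProj hφ e h A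

theorem tendsto_apply_of_tendsto_apply_finsetProj (hφ : Monotone φ) (e : HilbertBasis κ ℂ H)
    (h : Tendsto (fun F => φ (finsetProj e F)) atTop (𝓝 (φ 1))) {l : Filter ι}
    {A : ι → H →L[ℂ] H} {C : ℝ} (hC : ∀ i, ‖A i‖ ≤ C) {S : H →L[ℂ] H}
    (hS : ∀ x, Tendsto (fun i => A i x) l (𝓝 (S x))) :
    Tendsto (fun i => φ (A i)) l (𝓝 (φ S)) := by
  have hcut (F : Finset κ) :
      Tendsto (fun i => φ (A i * finsetProj e F)) l (𝓝 (φ (S * finsetProj e F))) := by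
    simp only [← sum_inner_densityOperator]
    exact tendsto_finsetSum _ fun j _ =>
      tendsto_const_nhds.inner (((densityOperator φ).continuous.tendsto _).comp (hS (e j)))
  exact (tendstoUniformly_apply_mul_finsetProj hφ e h hC).tendsto_of_eventually_tendsto
    (.of_forall hcut) (tendsto_apply_mul_finsetProj hφ e h S)

end

variable {H ι : Type} [NormedAddCommGroup H] [InnerProductSpace ℂ H] [CompleteSpace H]
  {φ : (H →L[ℂ] H) →L[ℂ] ℂ}

theorem tendsto_apply_finsetProj_of_isNormalState (hφ : Monotone φ) (hn : IsNormalState φ)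
    (e : HilbertBasis ι ℂ H) : Tendsto (fun F => φ (finsetProj e F)) atTop (𝓝 (φ 1)) := by
  have hproj (F : Finset ι) := isStarProjection_finsetProj (𝕜 := ℂ) e.orthonormal F
  have hlub := isLUB_range_finsetProj e
  refine tendsto_atTop_isLUB (hφ.comp (finsetProj_monotone e)) ?_
  exact hn (Finset ι) inferInstance inferInstance (finsetProj e)
    (fun _ _ h => finsetProj_monotone e h)
    (fun F => (ContinuousLinearMap.nonneg_iff_isPositive _).1 (hproj F).nonneg)
    ⟨1, fun F => (hproj F).norm_le⟩ 1
    ⟨fun F => hlub.1 ⟨F, rfl⟩, fun T hT => hlub.2 (Set.forall_mem_range.2 hT)⟩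

theorem isNormalState_of_tendsto_apply_finsetProj [Nontrivial H] (hφ : Monotone φ)
    (e : HilbertBasis ι ℂ H) (h : Tendsto (fun F => φ (finsetProj e F)) atTop (𝓝 (φ 1))) :
    IsNormalState φ := by
  rintro κ _ _ A hA - ⟨C, hC⟩ S ⟨hub, hleast⟩
  have hS : IsLUB (Set.range A) S :=
    ⟨Set.forall_mem_range.2 hub, fun T hT => hleast T fun i => hT ⟨i, rfl⟩⟩
  have : NoMinOrder (H →L[ℂ] H) := ⟨fun B => ⟨B - 1, sub_lt_self B zero_lt_one⟩⟩
  have : Nonempty κ := Set.range_nonempty_iff_nonempty.1 hS.nonempty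
  exact isLUB_of_tendsto_atTop (hφ.comp hA)
    (tendsto_apply_of_tendsto_apply_finsetProj hφ e h hC (tendsto_apply_of_isLUB_range hA hC hS))

end NormalFunctionals

theorem normal_state_iff_density_matrix_general {H : Type} [NormedAddCommGroup H]
    [InnerProductSpace ℂ H] [CompleteSpace H] [Nontrivial H]
    (φ : (H →L[ℂ] H) →L[ℂ] ℂ)
    (hpos : ∀ A : H →L[ℂ] H, A.IsPositive → 0 ≤ φ A) :
    IsNormalState φ ↔
      ∃ ρ : H →L[ℂ] H, ρ.IsPositive ∧
        (∀ (ι : Type) (e : HilbertBasis ι ℂ H),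
          Summable (fun j => ⟪e j, ρ (e j)⟫_ℂ) ∧ ∑' j, ⟪e j, ρ (e j)⟫_ℂ = φ 1) ∧
        (∀ (ι : Type) (e : HilbertBasis ι ℂ H) (A : H →L[ℂ] H),
          Summable (fun j => ⟪e j, ρ (A (e j))⟫_ℂ) ∧
            φ A = ∑' j, ⟪e j, ρ (A (e j))⟫_ℂ) := by
  have hφ : Monotone φ := (monotone_iff_map_nonneg φ).2 fun A hA =>
    hpos A ((ContinuousLinearMap.nonneg_iff_isPositive A).1 hA)
  constructor
  · intro hn
    have htrace (ι : Type) (e : HilbertBasis ι ℂ H) (A : H →L[ℂ] H) :=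
      hasSum_inner_densityOperator hφ e (tendsto_apply_finsetProj_of_isNormalState hφ hn e) A
    exact ⟨densityOperator φ, isPositive_densityOperator hφ,
      fun ι e => ⟨(htrace ι e 1).summable, (htrace ι e 1).tsum_eq⟩,
      fun ι e A => ⟨(htrace ι e A).summable, (htrace ι e A).tsum_eq.symm⟩⟩
  · rintro ⟨ρ, -, -, htrace⟩
    obtain ⟨w, e, -⟩ := exists_hilbertBasis ℂ H
    have hsum (A : H →L[ℂ] H) : HasSum (fun j => ⟪e j, ρ (A (e j))⟫_ℂ) (φ A) :=
      (htrace w e A).2 ▸ (htrace w e A).1.hasSum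
    obtain rfl := eq_densityOperator_of_hasSum e hsum
    refine isNormalState_of_tendsto_apply_finsetProj hφ e ?_
    simpa only [HasSum, SummationFilter.unconditional_filter, sum_inner_densityOperator, one_mul]
      using hsum 1

/-- A state on `B(H)` is normal iff it is given by a density matrix: a positive trace-class
operator `ρ` with `tr ρ = 1`, via `φ(A) = tr(ρ A)`. -/
theorem normal_state_iff_density_matrix {H : Type} [NormedAddCommGroup H]
    [InnerProductSpace ℂ H] [CompleteSpace H]
    (φ : (H →L[ℂ] H) →L[ℂ] ℂ)
    (hpos : ∀ A : H →L[ℂ] H, A.IsPositive → 0 ≤ φ A)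
    (hnorm : ‖φ‖ = 1) (hone : φ 1 = 1) :
    IsNormalState φ ↔
      ∃ ρ : H →L[ℂ] H, ρ.IsPositive ∧
        (∀ (ι : Type) (e : HilbertBasis ι ℂ H),
          Summable (fun j => ⟪e j, ρ (e j)⟫_ℂ) ∧ ∑' j, ⟪e j, ρ (e j)⟫_ℂ = 1) ∧
        (∀ (ι : Type) (e : HilbertBasis ι ℂ H) (A : H →L[ℂ] H),
          Summable (fun j => ⟪e j, ρ (A (e j))⟫_ℂ) ∧
            φ A = ∑' j, ⟪e j, ρ (A (e j))⟫_ℂ) := by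
  have : Nontrivial H := not_subsingleton_iff_nontrivial.1 fun _ => by
    simp [Subsingleton.elim (1 : H →L[ℂ] H) 0] at hone
  simpa only [hone] using normal_state_iff_density_matrix_general φ hpos
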